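/- Let t < T and let (φ_j)_{j=0}^∞ be the Legendre system on [t,T]: φ_j(x) = √((2j+1)/(T−t)) · P_j( (x − (T+t)/2)·2/(T−t) ), where P_j is the j-th Legendre polynomial given by the Rodrigues formula P_j(y) = (1/(2^j j!)) d^j/dy^j [(y²−1)^j]. Define C_{j_2 j_1} = ∫_t^T φ_{j_2}(s) ( ∫_t^s φ_{j_1}(τ) dτ ) ds. Then: C_{0,0} = (T−t)/2; for every integer i ≥ 1, C_{i, i−1} = (T−t)/(2√(4i²−1)) and C_{i−1, i} = −(T−t)/(2√(4i²−1)); and C_{j_2 j_1} = 0 for all other pairs (j_1, j_2), i.e. whenever |j_1 − j_2| ≠ 1 and (j_1,j_2) ≠ (0,0). -/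

import Mathlib

/-!
On `[-1, 1]` everything rests on the polynomial identity
`P_{n+2} - P_n = (2n+3) / (2^{n+1} (n+1)!) · dⁿ/dyⁿ (y²-1)^{n+1}`, which is
`d²/dy² (y²-1)^{n+2} = 2(n+2)(2n+3)(y²-1)^{n+1} + 4(n+2)(n+1)(y²-1)^n` differentiated `n` times.
It shows that `(P_{n+2} - P_n) / (2n+3)` is the antiderivative of `P_{n+1}` vanishing at both
endpoints. Hence, by orthogonality (repeated integration by parts), the matrix
`c_{mn} = ∫ P_m(y) ∫_{-1}^y P_n` is supported on `|m - n| = 1` and `(0, 0)`.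
Integration by parts makes it antisymmetric away from `(0, 0)`; comparing the entries `(n+1, n)`
and `(n, n+1)` yields `(2n+3) ∫ P_{n+1}² = (2n+1) ∫ P_n²`, so `∫ P_n² = 2 / (2n+1)`, which
determines all the entries. An affine substitution transports the result to `[t, T]`.
-/

open MeasureTheory intervalIntegral

/-- The `j`-th Legendre polynomial on `[-1,1]`, given by the Rodrigues formula
`P_j(y) = (1/(2^j j!)) dʲ/dyʲ [(y²-1)^j]`. -/
noncomputable def legendreP (j : ℕ) (y : ℝ) : ℝ :=
  (1 / (2 ^ j * (Nat.factorial j) : ℝ)) *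
    iteratedDeriv j (fun z : ℝ => (z ^ 2 - 1) ^ j) y

open Polynomial in
/-- The `n`-th Legendre polynomial as an element of `ℝ[X]`. -/
noncomputable def legPoly (n : ℕ) : ℝ[X] :=
  C (1 / (2 ^ n * (Nat.factorial n) : ℝ)) * derivative^[n] ((X ^ 2 - 1) ^ n)

/-- The antiderivative of `legPoly n` that vanishes at `-1`, written in the Legendre basis. -/
noncomputable def legPrim : ℕ → Polynomial ℝ
  | 0 => legPoly 1 + legPoly 0
  | n + 1 => Polynomial.C (1 / (2 * n + 3 : ℝ)) * (legPoly (n + 2) - legPoly n)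

/-- The pairing `∫_{-1}^1 p q`. -/
noncomputable def legPair (p q : Polynomial ℝ) : ℝ :=
  ∫ y in (-1 : ℝ)..1, p.eval y * q.eval y

section
open Polynomial

/-! ### Rodrigues formula and antiderivatives -/

lemma legendreP_eq_eval (n : ℕ) (y : ℝ) : legendreP n y = (legPoly n).eval y := by
  have key : ∀ (k : ℕ) (p : ℝ[X]),
      iteratedDeriv k (fun z : ℝ => p.eval z) = fun z => (derivative^[k] p).eval z := by
    intro k
    induction k with
    | zero => intro p; simp
    | succ k ih =>
      intro p
      rw [iteratedDeriv_succ, ih]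
      funext z
      rw [Function.iterate_succ_apply', Polynomial.deriv]
  have h := congrFun (key n ((X ^ 2 - 1) ^ n)) y
  simp only [eval_pow, eval_sub, eval_X, eval_one] at h
  simp [legendreP, legPoly, h]

lemma legPoly_zero : legPoly 0 = 1 := by simp [legPoly]

lemma legPoly_one : legPoly 1 = X := by
  simp only [legPoly, pow_one, Function.iterate_one, Nat.factorial_one, Nat.cast_one, mul_one,
    derivative_sub, derivative_X_sq, derivative_one, sub_zero, ← mul_assoc, ← C_mul]
  norm_num

/-- Applying `d²/dy²` to `(y²-1)^(n+2)` and using `y² = (y²-1) + 1`. -/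
lemma derivative_two_rodrigues (n : ℕ) :
    derivative (derivative ((X ^ 2 - 1 : ℝ[X]) ^ (n + 2))) =
      C (2 * (n + 2) * (2 * n + 3) : ℝ) * (X ^ 2 - 1) ^ (n + 1)
        + C (4 * (n + 2) * (n + 1) : ℝ) * (X ^ 2 - 1) ^ n := by
  simp only [derivative_pow, derivative_mul, derivative_sub, derivative_X, derivative_one,
    derivative_C, derivative_zero]
  simp only [map_mul, map_add, map_natCast, map_ofNat, map_one, Nat.add_sub_cancel,
    show n + 2 - 1 = n + 1 by lia]
  push_cast
  ring

/-- The difference `P_{n+2} - P_n` is again given by a Rodrigues-type formula, with one derivative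
fewer than needed to reach `P_{n+1}`. -/
lemma legPoly_sub (n : ℕ) : legPoly (n + 2) - legPoly n =
    C ((2 * n + 3) / (2 ^ (n + 1) * (Nat.factorial (n + 1)) : ℝ)) *
      derivative^[n] ((X ^ 2 - 1) ^ (n + 1)) := by
  have h1 : derivative^[n + 2] ((X ^ 2 - 1 : ℝ[X]) ^ (n + 2)) =
      C (2 * (n + 2) * (2 * n + 3) : ℝ) * derivative^[n] ((X ^ 2 - 1) ^ (n + 1))
        + C (4 * (n + 2) * (n + 1) : ℝ) * derivative^[n] ((X ^ 2 - 1) ^ n) := by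
    rw [Function.iterate_add_apply]
    simp only [Function.iterate_succ, Function.iterate_zero, Function.comp, id]
    rw [derivative_two_rodrigues, iterate_map_add, iterate_derivative_C_mul,
      iterate_derivative_C_mul]
  have hf : (Nat.factorial n : ℝ) ≠ 0 := by positivity
  have e1 : (1 / (2 ^ (n + 2) * (Nat.factorial (n + 2)) : ℝ)) * (2 * (n + 2) * (2 * n + 3)) =
      (2 * n + 3) / (2 ^ (n + 1) * (Nat.factorial (n + 1)) : ℝ) := by
    simp only [Nat.factorial_succ]
    push_cast
    field_simp
    ring
  have e2 : (1 / (2 ^ (n + 2) * (Nat.factorial (n + 2)) : ℝ)) * (4 * (n + 2) * (n + 1)) =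
      1 / (2 ^ n * (Nat.factorial n) : ℝ) := by
    simp only [Nat.factorial_succ]
    push_cast
    field_simp
    ring
  rw [legPoly, legPoly, h1, mul_add, ← mul_assoc, ← mul_assoc, ← C_mul, ← C_mul, e1, e2,
    add_sub_cancel_right]

lemma iterate_derivative_rodrigues_eval {k n : ℕ} (hk : k < n) {x : ℝ} (hx : x ^ 2 = 1) :
    (derivative^[k] ((X ^ 2 - 1 : ℝ[X]) ^ n)).eval x = 0 := by
  obtain ⟨q, hq⟩ := pow_sub_dvd_iterate_derivative_pow (X ^ 2 - 1 : ℝ[X]) n k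
  rw [hq, eval_mul, eval_pow]
  simp [hx, Nat.sub_ne_zero_of_lt hk]

lemma derivative_legPrim (n : ℕ) : derivative (legPrim n) = legPoly n := by
  cases n with
  | zero => simp [legPrim, legPoly_zero, legPoly_one]
  | succ n =>
    have h : (2 * n + 3 : ℝ) ≠ 0 := by positivity
    rw [legPrim, legPoly_sub, ← mul_assoc, ← C_mul, derivative_C_mul,
      ← Function.iterate_succ_apply' derivative, legPoly]
    congr 2
    field_simp

lemma legPrim_eval_neg_one (n : ℕ) : (legPrim n).eval (-1) = 0 := by
  cases n with
  | zero => simp [legPrim, legPoly_zero, legPoly_one]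
  | succ n =>
    rw [legPrim, legPoly_sub, eval_mul, eval_mul,
      iterate_derivative_rodrigues_eval n.lt_succ_self (by norm_num), mul_zero, mul_zero]

lemma legPrim_succ_eval_one (n : ℕ) : (legPrim (n + 1)).eval 1 = 0 := by
  rw [legPrim, legPoly_sub, eval_mul, eval_mul,
    iterate_derivative_rodrigues_eval n.lt_succ_self (by norm_num), mul_zero, mul_zero]

/-! ### Orthogonality -/

lemma legPair_comm (p q : ℝ[X]) : legPair p q = legPair q p := by
  simp only [legPair, mul_comm]

lemma legPair_add (p q r : ℝ[X]) : legPair p (q + r) = legPair p q + legPair p r := by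
  simp only [legPair, eval_add, mul_add]
  exact intervalIntegral.integral_add ((by fun_prop : Continuous _).intervalIntegrable _ _)
    ((by fun_prop : Continuous _).intervalIntegrable _ _)

lemma legPair_C_mul (a : ℝ) (p q : ℝ[X]) : legPair p (C a * q) = a * legPair p q := by
  simp only [legPair, eval_mul, eval_C, ← intervalIntegral.integral_const_mul]
  congr 1; funext y; ring

lemma legPair_sub (p q r : ℝ[X]) : legPair p (q - r) = legPair p q - legPair p r := by
  have h : q - r = q + C (-1) * r := by simp [sub_eq_add_neg]
  rw [h, legPair_add, legPair_C_mul]; ring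

/-- Integration by parts. -/
lemma legPair_parts (p q : ℝ[X]) : legPair (derivative p) q + legPair (derivative q) p =
    p.eval 1 * q.eval 1 - p.eval (-1) * q.eval (-1) := by
  rw [legPair_comm (derivative q) p]
  simp only [legPair]
  rw [← intervalIntegral.integral_add ((by fun_prop : Continuous _).intervalIntegrable _ _)
    ((by fun_prop : Continuous _).intervalIntegrable _ _)]
  exact intervalIntegral.integral_deriv_mul_eq_sub (fun x _ => p.hasDerivAt x)
    (fun x _ => q.hasDerivAt x) ((by fun_prop : Continuous _).intervalIntegrable _ _)
    ((by fun_prop : Continuous _).intervalIntegrable _ _)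

/-- Repeated integration by parts: the boundary terms vanish because `(y²-1)^n` has zeros of
order `n` at `±1`. -/
lemma legPair_rodrigues_eq_zero {n : ℕ} (k : ℕ) (hk : k ≤ n) (q : ℝ[X])
    (hq : derivative^[k] q = 0) : legPair (derivative^[k] ((X ^ 2 - 1) ^ n)) q = 0 := by
  induction k generalizing q with
  | zero => simp at hq; simp [hq, legPair]
  | succ k ih =>
    have h := legPair_parts (derivative^[k] ((X ^ 2 - 1) ^ n)) q
    rw [legPair_comm (derivative q), ih (by lia) _ hq,
      iterate_derivative_rodrigues_eval hk (by norm_num),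
      iterate_derivative_rodrigues_eval hk (by norm_num)] at h
    rw [Function.iterate_succ_apply']
    linarith

lemma legPair_legPoly_of_lt {m n : ℕ} (h : m < n) : legPair (legPoly n) (legPoly m) = 0 := by
  rw [legPair_comm, legPoly.eq_def n, legPair_C_mul, legPair_comm,
    legPair_rodrigues_eq_zero n le_rfl, mul_zero]
  rw [legPoly, iterate_derivative_C_mul, ← Function.iterate_add_apply,
    iterate_derivative_eq_zero, mul_zero]
  have : ((X ^ 2 - 1 : ℝ[X]) ^ m).natDegree = 2 * m := by
    rw [natDegree_pow, ← C_1, natDegree_X_pow_sub_C, mul_comm]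
  lia

lemma legPair_legPoly_of_ne {m n : ℕ} (h : m ≠ n) : legPair (legPoly m) (legPoly n) = 0 := by
  rcases h.lt_or_gt with h | h
  · rw [legPair_comm, legPair_legPoly_of_lt h]
  · exact legPair_legPoly_of_lt h

/-! ### The coefficients on `[-1, 1]` -/

lemma legPair_legPrim_succ (m n : ℕ) : legPair (legPoly m) (legPrim (n + 1)) =
    1 / (2 * n + 3) * (legPair (legPoly m) (legPoly (n + 2)) -
      legPair (legPoly m) (legPoly n)) := by
  rw [legPrim, legPair_C_mul, legPair_sub]

lemma legPair_legPrim_zero (m : ℕ) : legPair (legPoly m) (legPrim 0) =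
    legPair (legPoly m) (legPoly 1) + legPair (legPoly m) (legPoly 0) := by
  rw [legPrim, legPair_add]

/-- The coefficient matrix `∫ P_m ∫ P_n` is antisymmetric off the entry `(0, 0)`. -/
lemma legPair_legPrim_antisymm (m n : ℕ) : legPair (legPoly m) (legPrim (n + 1)) =
    -legPair (legPoly (n + 1)) (legPrim m) := by
  have h := legPair_parts (legPrim m) (legPrim (n + 1))
  rw [derivative_legPrim, derivative_legPrim, legPrim_succ_eval_one, legPrim_eval_neg_one] at h
  linarith

lemma legPair_self_zero : legPair (legPoly 0) (legPoly 0) = 2 := by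
  simp [legPair, legPoly_zero]; norm_num

lemma legPair_legPrim_succ_self (n : ℕ) : legPair (legPoly (n + 1)) (legPrim n) =
    1 / (2 * n + 1) * legPair (legPoly (n + 1)) (legPoly (n + 1)) := by
  cases n with
  | zero =>
    rw [legPair_legPrim_zero, legPair_legPoly_of_ne (m := 0 + 1) (n := 0) (by lia)]
    simp
  | succ n =>
    rw [legPair_legPrim_succ, legPair_legPoly_of_ne (m := n + 1 + 1) (n := n) (by lia)]
    push_cast
    ring

/-- The value of `∫ P_n²`. Antisymmetry at the entry `(n, n + 1)` gives the recursion
`(2n+3) ∫ P_{n+1}² = (2n+1) ∫ P_n²`. -/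
lemma legPair_self (n : ℕ) : legPair (legPoly n) (legPoly n) = 2 / (2 * n + 1) := by
  induction n with
  | zero => rw [legPair_self_zero]; norm_num
  | succ n ih =>
    have h := legPair_legPrim_antisymm n n
    rw [legPair_legPrim_succ_self, legPair_legPrim_succ,
      legPair_legPoly_of_ne (m := n) (n := n + 2) (by lia), ih] at h
    have h1 : (2 * n + 1 : ℝ) ≠ 0 := by positivity
    have h3 : (2 * n + 3 : ℝ) ≠ 0 := by positivity
    have h4 : (2 * (n + 1) + 1 : ℝ) ≠ 0 := by positivity
    push_cast
    field_simp at h ⊢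
    linarith

lemma legPair_legPrim_eq_zero {m n : ℕ} (h0 : ¬(n = 0 ∧ m = 0)) (h1 : m ≠ n + 1)
    (h2 : n ≠ m + 1) : legPair (legPoly m) (legPrim n) = 0 := by
  cases n with
  | zero =>
    rw [legPair_legPrim_zero, legPair_legPoly_of_ne (by lia), legPair_legPoly_of_ne (by lia),
      add_zero]
  | succ n =>
    rw [legPair_legPrim_succ, legPair_legPoly_of_ne (by lia), legPair_legPoly_of_ne (by lia),
      sub_zero, mul_zero]

/-! ### Transport to `[t, T]` -/

/-- The affine substitution carrying `[t, T]` onto `[-1, 1]`. -/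
lemma coeff_eq_legPair (t T : ℝ) (ht : t < T) (m n : ℕ) (a b : ℝ) :
    (∫ s in t..T, (a * legendreP m ((s - (T + t) / 2) * (2 / (T - t)))) *
      ∫ τ in t..s, b * legendreP n ((τ - (T + t) / 2) * (2 / (T - t)))) =
    a * b * ((T - t) / 2) ^ 2 * legPair (legPoly m) (legPrim n) := by
  have hT : T - t ≠ 0 := by linarith
  have inner : ∀ s, (∫ τ in t..s, b * legendreP n ((τ - (T + t) / 2) * (2 / (T - t)))) =
      b * ((T - t) / 2) * (legPrim n).eval ((s - (T + t) / 2) * (2 / (T - t))) := by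
    intro s
    simp only [legendreP_eq_eval]
    have hd : ∀ x ∈ Set.uIcc t s, HasDerivAt
        (fun x => b * ((T - t) / 2) * (legPrim n).eval ((x - (T + t) / 2) * (2 / (T - t))))
        (b * (legPoly n).eval ((x - (T + t) / 2) * (2 / (T - t)))) x := by
      intro x _
      have h1 : HasDerivAt (fun x : ℝ => (x - (T + t) / 2) * (2 / (T - t)))
          (1 * (2 / (T - t))) x := ((hasDerivAt_id x).sub_const _).mul_const _
      have h2 := ((((legPrim n).hasDerivAt _).comp x h1).const_mul (b * ((T - t) / 2)))
      rw [derivative_legPrim] at h2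
      refine h2.congr_deriv ?_
      have e : (T - t) / 2 * (2 / (T - t)) = 1 := by field_simp
      linear_combination b * (legPoly n).eval ((x - (T + t) / 2) * (2 / (T - t))) * e
    rw [intervalIntegral.integral_eq_sub_of_hasDerivAt hd
      ((by fun_prop : Continuous _).intervalIntegrable _ _)]
    have e : (t - (T + t) / 2) * (2 / (T - t)) = -1 := by field_simp; ring
    rw [e, legPrim_eval_neg_one, mul_zero, sub_zero]
  simp only [inner]
  simp only [legendreP_eq_eval]
  have hc : 2 / (T - t) ≠ 0 := by positivity
  have sub := intervalIntegral.integral_comp_mul_sub (a := t) (b := T)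
    (fun y => (legPoly m).eval y * (legPrim n).eval y) hc ((T + t) / 2 * (2 / (T - t)))
  have e1 : 2 / (T - t) * t - (T + t) / 2 * (2 / (T - t)) = -1 := by field_simp; ring
  have e2 : 2 / (T - t) * T - (T + t) / 2 * (2 / (T - t)) = 1 := by field_simp; ring
  rw [e1, e2, smul_eq_mul, inv_div] at sub
  calc _ = ∫ s in t..T, a * b * ((T - t) / 2) *
        ((legPoly m).eval (2 / (T - t) * s - (T + t) / 2 * (2 / (T - t))) *
          (legPrim n).eval (2 / (T - t) * s - (T + t) / 2 * (2 / (T - t)))) := by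
        congr 1; funext s
        rw [show (s - (T + t) / 2) * (2 / (T - t)) =
          2 / (T - t) * s - (T + t) / 2 * (2 / (T - t)) by ring]
        ring
    _ = _ := by
        rw [intervalIntegral.integral_const_mul, sub, legPair]; ring

end

/-- For the orthonormal Legendre system `φ_j` on `[t,T]`, the double
Fourier–Legendre coefficients `C_{j_2 j_1} = ∫_t^T φ_{j_2}(s) ∫_t^s φ_{j_1}(τ) dτ ds`
of the kernel `1_{τ<s}` are: `C_{0,0} = (T-t)/2`,
`C_{i,i-1} = (T-t)/(2√(4i²-1))` and `C_{i-1,i} = -(T-t)/(2√(4i²-1))` for `i ≥ 1`,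
and `C_{j_2 j_1} = 0` whenever `|j_1 - j_2| ≠ 1` and `(j_1,j_2) ≠ (0,0)`. -/
theorem legendre_double_fourier_coefficients
    (t T : ℝ) (ht : t < T)
    (φ : ℕ → ℝ → ℝ)
    (hφ : ∀ j : ℕ, ∀ x : ℝ,
      φ j x = Real.sqrt ((2 * j + 1) / (T - t)) *
        legendreP j ((x - (T + t) / 2) * (2 / (T - t))))
    (C : ℕ → ℕ → ℝ)
    (hC : ∀ j₂ j₁ : ℕ,
      C j₂ j₁ = ∫ s in t..T, φ j₂ s * ∫ τ in t..s, φ j₁ τ) :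
    C 0 0 = (T - t) / 2
    ∧ (∀ i : ℕ, 1 ≤ i →
        C i (i - 1) = (T - t) / (2 * Real.sqrt (4 * (i : ℝ) ^ 2 - 1))
        ∧ C (i - 1) i = -((T - t) / (2 * Real.sqrt (4 * (i : ℝ) ^ 2 - 1))))
    ∧ (∀ j₁ j₂ : ℕ, ¬(j₁ = 0 ∧ j₂ = 0) → |(j₁ : ℤ) - (j₂ : ℤ)| ≠ 1 →
        C j₂ j₁ = 0) := by
  have key : ∀ m n : ℕ, C m n = Real.sqrt ((2 * m + 1) / (T - t)) *
      Real.sqrt ((2 * n + 1) / (T - t)) * ((T - t) / 2) ^ 2 *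
        legPair (legPoly m) (legPrim n) := by
    intro m n
    rw [hC, ← coeff_eq_legPair t T ht]
    simp only [hφ]
  have hT : 0 < T - t := by linarith
  have sub_diag : ∀ k : ℕ, C (k + 1) k =
      (T - t) / (2 * Real.sqrt (4 * ((k + 1 : ℕ) : ℝ) ^ 2 - 1)) := by
    intro k
    have hS : (0 : ℝ) < (2 * k + 1) * (2 * k + 3) := by positivity
    have e : 4 * ((k + 1 : ℕ) : ℝ) ^ 2 - 1 = (2 * k + 1) * (2 * k + 3) := by push_cast; ring
    have e' : (2 * ((k + 1 : ℕ) : ℝ) + 1) / (T - t) * ((2 * k + 1) / (T - t)) =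
        (2 * k + 1) * (2 * k + 3) / (T - t) ^ 2 := by push_cast; field_simp; ring
    have hs : Real.sqrt ((2 * k + 1) * (2 * k + 3)) ^ 2 = (2 * k + 1) * (2 * k + 3) :=
      Real.sq_sqrt hS.le
    have hp : 0 < Real.sqrt ((2 * k + 1) * (2 * k + 3)) := Real.sqrt_pos.2 hS
    rw [key, legPair_legPrim_succ_self, legPair_self, ← Real.sqrt_mul (by positivity), e', e,
      Real.sqrt_div hS.le, Real.sqrt_sq hT.le]
    have e3 : (1 : ℝ) / (2 * k + 1) * (2 / (2 * ((k + 1 : ℕ) : ℝ) + 1)) =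
        2 / Real.sqrt ((2 * k + 1) * (2 * k + 3)) ^ 2 := by
      rw [hs]; push_cast; field_simp; ring
    rw [e3]
    field_simp
  refine ⟨?_, ?_, ?_⟩
  · rw [key, legPair_legPrim_zero, legPair_legPoly_of_ne (by lia), legPair_self_zero,
      Real.mul_self_sqrt (by positivity)]
    simp only [Nat.cast_zero]
    field_simp
    ring
  · intro i hi
    obtain ⟨k, rfl⟩ := Nat.exists_eq_add_of_le' hi
    rw [Nat.add_sub_cancel]
    refine ⟨sub_diag k, ?_⟩
    rw [← sub_diag k, key, key, legPair_legPrim_antisymm]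
    ring
  · intro j₁ j₂ h0 h1
    rw [key, legPair_legPrim_eq_zero h0 (by rintro rfl; simp at h1)
      (by rintro rfl; simp at h1), mul_zero]
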